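/- Let E be a real inner product space, let K ≥ 1, and let ĝ_1, …, ĝ_K ∈ E. Suppose α* ∈ Δ^K minimizes the function α ↦ ‖∑_{k=1}^K α_k ĝ_k‖² over the probability simplex Δ^K, and set d* = ∑_{k=1}^K α*_k ĝ_k. Then for every k, ⟨ĝ_k, d*⟩ ≥ ‖d*‖². In particular, if d* ≠ 0 then ⟨ĝ_k, d*⟩ > 0 for every k, so −d* is a common descent direction: the update direction improves all reward objectives simultaneously. -/

import Mathlib

open RealInnerProductSpace

/-!
The direction `d*` is the projection of the origin onto the convex hull of the gradients. The
variational inequality for this projection, `⟪0 - d*, x - d*⟫ ≤ 0` for every `x` in the hull, is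
the claim when `x` is one of the gradients.
-/

section ConvexCombination

variable {R E ι : Type*} [Field R] [LinearOrder R] [IsStrictOrderedRing R]
  [AddCommGroup E] [Module R E] [Fintype ι]

theorem convexHull_range_eq_image_stdSimplex (g : ι → E) :
    convexHull R (Set.range g) = (fun w : ι → R ↦ ∑ i, w i • g i) '' stdSimplex R ι := by
  classical
  have range_eq : Set.range g =
      Fintype.linearCombination R g '' Set.range fun i : ι ↦ Pi.single i (1 : R) := by
    rw [← Set.range_comp]
    congr with i
    simp
  rw [range_eq, ← LinearMap.image_convexHull, convexHull_rangle_single_eq_stdSimplex]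
  rfl

theorem isMinOn_convexHull_range_iff {β : Type*} [Preorder β] {f : E → β} {g : ι → E} {x : E} :
    IsMinOn f (convexHull R (Set.range g)) x ↔
      ∀ w : ι → R, (∀ i, 0 ≤ w i) → ∑ i, w i = 1 → f x ≤ f (∑ i, w i • g i) := by
  rw [convexHull_range_eq_image_stdSimplex, isMinOn_iff, Set.forall_mem_image]
  exact forall_congr' fun _ ↦ and_imp

end ConvexCombination

section MinimalNorm

variable {E : Type*} [NormedAddCommGroup E] [InnerProductSpace ℝ E]

theorem norm_sq_le_inner_of_isMinOn_norm {s : Set E} (hs : Convex ℝ s) {d x : E} (hd : d ∈ s)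
    (hmin : IsMinOn norm s d) (hx : x ∈ s) : ‖d‖ ^ 2 ≤ ⟪x, d⟫ := by
  have dist_eq_iInf : ‖0 - d‖ = ⨅ y : s, ‖0 - (y : E)‖ := by
    simpa only [zero_sub, norm_neg] using (hmin.iInf_eq hd).symm
  have obtuse : ⟪0 - d, x - d⟫ ≤ 0 :=
    (norm_eq_iInf_iff_real_inner_le_zero hs hd).1 dist_eq_iInf x hx
  rw [zero_sub, inner_neg_left, inner_sub_right, real_inner_self_eq_norm_sq,
    real_inner_comm] at obtuse
  linarith

theorem marble_harmonized_direction_common_descent_general {ι : Type*} {g : ι → E} {d : E}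
    (hd : d ∈ convexHull ℝ (Set.range g))
    (hmin : IsMinOn (fun x ↦ ‖x‖ ^ 2) (convexHull ℝ (Set.range g)) d) :
    (∀ k, ⟪g k, d⟫ ≥ ‖d‖ ^ 2) ∧ (d ≠ 0 → ∀ k, 0 < ⟪g k, d⟫) := by
  have hmin_norm : IsMinOn norm (convexHull ℝ (Set.range g)) d := fun x hx ↦
    (sq_le_sq₀ (norm_nonneg d) (norm_nonneg x)).1 (hmin hx)
  have norm_sq_le (k : ι) : ‖d‖ ^ 2 ≤ ⟪g k, d⟫ :=
    norm_sq_le_inner_of_isMinOn_norm (convex_convexHull ℝ _) hd hmin_norm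
      (subset_convexHull ℝ _ (Set.mem_range_self k))
  exact ⟨norm_sq_le, fun hd0 k ↦ (pow_pos (norm_pos_iff.2 hd0) 2).trans_le (norm_sq_le k)⟩

end MinimalNorm

/-- **The harmonized direction is a common descent direction (Désidéri).**
If `α*` minimizes `α ↦ ‖∑ k, α k • ĝ k‖²` over the probability simplex and
`d* = ∑ k, α* k • ĝ k`, then `⟪ĝ k, d*⟫ ≥ ‖d*‖²` for every `k`; in particular, if
`d* ≠ 0` then `⟪ĝ k, d*⟫ > 0` for every `k`, so `−d*` improves all rewards. -/
theorem marble_harmonized_direction_common_descent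
    {E : Type*} [NormedAddCommGroup E] [InnerProductSpace ℝ E]
    (K : ℕ) (hK : 1 ≤ K)
    (g : Fin K → E)
    (αstar : Fin K → ℝ) (hαstar0 : ∀ k, 0 ≤ αstar k) (hαstar1 : ∑ k, αstar k = 1)
    (hmin : ∀ α : Fin K → ℝ, (∀ k, 0 ≤ α k) → ∑ k, α k = 1 →
      ‖∑ k, αstar k • g k‖ ^ 2 ≤ ‖∑ k, α k • g k‖ ^ 2)
    (d : E) (hd : d = ∑ k, αstar k • g k) :
    (∀ k, ⟪g k, d⟫ ≥ ‖d‖ ^ 2) ∧ (d ≠ 0 → ∀ k, 0 < ⟪g k, d⟫) := by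
  subst hd
  exact marble_harmonized_direction_common_descent_general
    (mem_convexHull_of_exists_fintype αstar g hαstar0 hαstar1 Set.mem_range_self rfl)
    (isMinOn_convexHull_range_iff.2 hmin)
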